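/- Let K = (k_1,…,k_r) be any finite sequence of positive integers. Then ρ̄( Σ_{Π ∈ P(r)} c̄(Π) · H(K;Π;T) ) = Σ_{Π ∈ P(r)} c̄(Π) · H*(K;Π;T) in ℝ[T]. -/

import Mathlib

open Finset

open scoped Classical

/-- The Riemann zeta value `ζ(m) = Σ_{n ≥ 1} 1/n^m`. -/
noncomputable def zetaVal (m : ℕ) : ℝ := ∑' n : ℕ, 1 / ((n : ℝ) + 1) ^ m

/-- `E(k;T) ∈ ℝ[T]`: the constant polynomial `ζ(k)` if `k ≥ 2`, the variable `T` if `k = 1`. -/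
noncomputable def Epoly (k : ℕ) : Polynomial ℝ :=
  if k = 1 then Polynomial.X else Polynomial.C (zetaVal k)

/-- The set of partitions of a finite set `S`: sets of nonempty pairwise disjoint
subsets (blocks) of `S` whose union is `S`. -/
noncomputable def partitionsOf {α : Type*} [DecidableEq α] (S : Finset α) :
    Finset (Finset (Finset α)) :=
  S.powerset.powerset.filter (fun π =>
    (∀ P ∈ π, P.Nonempty) ∧
    (∀ P ∈ π, ∀ Q ∈ π, P ≠ Q → Disjoint P Q) ∧
    π.biUnion id = S)

/-- `c̄(Π) = ∏_{P ∈ Π} (|P| - 1)!`. -/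
def cbar {α : Type*} (π : Finset (Finset α)) : ℕ :=
  ∏ P ∈ π, (P.card - 1).factorial

/-- The harmonic-type polynomial `H(K;Π;T) = ∏_{P ∈ Π} E(Σ_{p ∈ P} k_p; T)`. -/
noncomputable def Hpoly {r : ℕ} (k : Fin r → ℕ) (π : Finset (Finset (Fin r))) :
    Polynomial ℝ :=
  ∏ P ∈ π, Epoly (∑ p ∈ P, k p)

/-- The shuffle-type polynomial `H*(K;Π;T) = ∏_{P ∈ Π} χ_K(P) · E(Σ_{p ∈ P} k_p; T)`,
where `χ_K(P) = 0` if `|P| > 1` and `k_p = 1` for all `p ∈ P`, and `χ_K(P) = 1` otherwise. -/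
noncomputable def Hstar {r : ℕ} (k : Fin r → ℕ) (π : Finset (Finset (Fin r))) :
    Polynomial ℝ :=
  ∏ P ∈ π,
    (if 1 < P.card ∧ ∀ p ∈ P, k p = 1 then 0 else 1) * Epoly (∑ p ∈ P, k p)

/-- `ρ̄(T^s) = s! Σ (∏_{m=2}^s (−ζ(m)/m)^{i_m}/i_m!) T^j/j!`, the sum over tuples
`(j, i_2, …, i_s)` of nonnegative integers with `j + Σ_{m=2}^s m·i_m = s`.
Tuples are encoded as pairs `(j, i)` with `i : Fin (s+1) → ℕ` supported on indices
`m ≥ 2` (the values `i 0`, `i 1` are forced to be `0`); the bound `i m ≤ s` is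
automatic, so ranging over `{0,…,s}` captures all tuples. -/
noncomputable def rhoX (s : ℕ) : Polynomial ℝ :=
  (s.factorial : Polynomial ℝ) *
    ∑ j ∈ Finset.range (s + 1),
      ∑ i ∈ (Fintype.piFinset fun _ : Fin (s + 1) => Finset.range (s + 1)).filter
          (fun i => (∀ m : Fin (s + 1), m.1 < 2 → i m = 0) ∧
            j + ∑ m : Fin (s + 1), m.1 * i m = s),
        (∏ m : Fin (s + 1),
            Polynomial.C ((-(zetaVal m.1) / (m.1 : ℝ)) ^ i m / ((i m).factorial : ℝ))) *
          (Polynomial.X ^ j * Polynomial.C ((j.factorial : ℝ)⁻¹))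

/-- The `ℝ`-linear endomorphism `ρ̄` of `ℝ[T]`, defined on monomials by `T^s ↦ ρ̄(T^s)`
and extended by linearity. -/
noncomputable def rho (p : Polynomial ℝ) : Polynomial ℝ :=
  ∑ s ∈ p.support, Polynomial.C (p.coeff s) * rhoX s

/-!
Weight each block `P` by `f(P)` and sum the products of the weights over all partitions of `S`.
Splitting the weight as `f + g` splits this sum into a convolution over the subsets `U ⊆ S`
covered by the blocks that receive `f`.

Both sides of the theorem are such sums. The weight `(|P| - 1)! E(∑_{p ∈ P} k_p; T)` of the harmonic
side is a constant, except on the singletons `{p}` with `k_p = 1`, where it is `T`. Hence the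
harmonic side is a convolution of `U ↦ T^|U|`, on sets `U` of indices with `k_p = 1`, with a
constant set function, and `ρ̄` replaces each `T^|U|` by `ρ̄(T^|U|)`. By the exponential formula
`ρ̄(T^|U|)` is again a partition sum, now with weight `T` on singletons and `-(m - 1)! ζ(m)` on
blocks of size `m ≥ 2`. Adding the weights back together, the blocks with `|P| ≥ 2` and all
`k_p = 1` get weight `(|P| - 1)! ζ(|P|) - (|P| - 1)! ζ(|P|) = 0`, which is the factor `χ_K(P)`.
-/

section PartitionSum

variable {α : Type*} [DecidableEq α] {S U : Finset α} {π σ : Finset (Finset α)}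

theorem mem_partitionsOf :
    π ∈ partitionsOf S ↔ (∀ P ∈ π, P.Nonempty) ∧
      (∀ P ∈ π, ∀ Q ∈ π, P ≠ Q → Disjoint P Q) ∧ π.biUnion id = S := by
  simp only [partitionsOf, mem_filter, mem_powerset, and_iff_right_iff_imp]
  rintro ⟨-, -, rfl⟩ P hP
  exact mem_powerset.2 (subset_biUnion_of_mem id hP)

theorem subset_of_mem_partitionsOf (hπ : π ∈ partitionsOf S) {P : Finset α} (hP : P ∈ π) :
    P ⊆ S :=
  (mem_partitionsOf.1 hπ).2.2 ▸ subset_biUnion_of_mem id hP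

theorem exists_mem_block_of_mem_partitionsOf (hπ : π ∈ partitionsOf S) {a : α} (ha : a ∈ S) :
    ∃ P ∈ π, a ∈ P := by
  rwa [← (mem_partitionsOf.1 hπ).2.2, mem_biUnion] at ha

theorem partitionsOf_empty : partitionsOf (∅ : Finset α) = {∅} := by
  refine eq_singleton_iff_unique_mem.2 ⟨by simp [mem_partitionsOf], fun π hπ => ?_⟩
  refine eq_empty_of_forall_notMem fun P hP => ?_
  exact ((mem_partitionsOf.1 hπ).1 P hP).ne_empty
    (subset_empty.1 (subset_of_mem_partitionsOf hπ hP))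

theorem singleton_mem_partitionsOf (hS : S.Nonempty) : {S} ∈ partitionsOf S := by
  simp [mem_partitionsOf, hS]

theorem eq_singleton_of_forall_mem_block (hπ : π ∈ partitionsOf S) {a : α} (ha : a ∈ S)
    (hblocks : ∀ P ∈ π, a ∈ P) : π = {S} := by
  obtain ⟨P, hP, -⟩ := exists_mem_block_of_mem_partitionsOf hπ ha
  obtain ⟨-, hdisj, hunion⟩ := mem_partitionsOf.1 hπ
  have hπP : π = {P} := eq_singleton_iff_unique_mem.2 ⟨hP, fun Q hQ => by
    by_contra hne
    exact disjoint_left.1 (hdisj Q hQ P hP hne) (hblocks Q hQ) (hblocks P hP)⟩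
  rw [hπP, singleton_biUnion, id] at hunion
  rw [hπP, hunion]

theorem mem_partitionsOf_biUnion_of_subset (hπ : π ∈ partitionsOf S) (hσ : σ ⊆ π) :
    σ ∈ partitionsOf (σ.biUnion id) := by
  obtain ⟨hne, hdisj, -⟩ := mem_partitionsOf.1 hπ
  exact mem_partitionsOf.2 ⟨fun P hP => hne P (hσ hP),
    fun P hP Q hQ => hdisj P (hσ hP) Q (hσ hQ), rfl⟩

theorem sdiff_mem_partitionsOf (hπ : π ∈ partitionsOf S) (hσ : σ ⊆ π) :
    π \ σ ∈ partitionsOf (S \ σ.biUnion id) := by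
  obtain ⟨-, hdisj, hunion⟩ := mem_partitionsOf.1 hπ
  have hsdiff := mem_partitionsOf_biUnion_of_subset hπ (sdiff_subset (s := π) (t := σ))
  suffices (π \ σ).biUnion id = S \ σ.biUnion id by rwa [this] at hsdiff
  have hdisjoint : Disjoint ((π \ σ).biUnion id) (σ.biUnion id) := by
    simp only [disjoint_biUnion_left, disjoint_biUnion_right, mem_sdiff, id]
    exact fun Q hQ P hP => hdisj P hP.1 Q (hσ hQ) fun h => hP.2 (h ▸ hQ)
  rw [← hunion, ← sdiff_union_of_subset hσ, union_biUnion, union_sdiff_cancel_right hdisjoint,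
    sdiff_union_of_subset hσ]

theorem disjoint_blocks_of_disjoint (hπ : π ∈ partitionsOf S) (hσ : σ ∈ partitionsOf U)
    (hSU : Disjoint S U) {P Q : Finset α} (hP : P ∈ π) (hQ : Q ∈ σ) : Disjoint P Q :=
  hSU.mono (subset_of_mem_partitionsOf hπ hP) (subset_of_mem_partitionsOf hσ hQ)

theorem disjoint_of_mem_partitionsOf (hπ : π ∈ partitionsOf S) (hσ : σ ∈ partitionsOf U)
    (hSU : Disjoint S U) : Disjoint π σ :=
  disjoint_left.2 fun P hPπ hPσ => ((mem_partitionsOf.1 hπ).1 P hPπ).ne_empty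
    (disjoint_self_iff_empty P |>.1 (disjoint_blocks_of_disjoint hπ hσ hSU hPπ hPσ))

theorem union_mem_partitionsOf (hπ : π ∈ partitionsOf S) (hσ : σ ∈ partitionsOf U)
    (hSU : Disjoint S U) : π ∪ σ ∈ partitionsOf (S ∪ U) := by
  have hcross {P Q} (hP : P ∈ π) (hQ : Q ∈ σ) : Disjoint P Q :=
    disjoint_blocks_of_disjoint hπ hσ hSU hP hQ
  obtain ⟨hπne, hπdisj, rfl⟩ := mem_partitionsOf.1 hπ
  obtain ⟨hσne, hσdisj, rfl⟩ := mem_partitionsOf.1 hσ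
  refine mem_partitionsOf.2 ⟨fun P hP => (mem_union.1 hP).elim (hπne P) (hσne P),
    fun P hP Q hQ hne => ?_, union_biUnion⟩
  rcases mem_union.1 hP with hP | hP <;> rcases mem_union.1 hQ with hQ | hQ
  exacts [hπdisj P hP Q hQ hne, hcross hP hQ, (hcross hQ hP).symm, hσdisj P hP Q hQ hne]

variable {R : Type*} [CommSemiring R]

/-- The sum `∑_Π ∏_{P ∈ Π} f(P)` over all partitions `Π` of `S` of the product of the weights of
the blocks. As a function of `S` it is the exponential of `f` with respect to the convolution
`(F ⋆ G)(S) = ∑_{U ⊆ S} F(U) G(S \ U)` of set functions; only the values of `f` at nonempty sets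
matter. -/
noncomputable def partitionSum (f : Finset α → R) (S : Finset α) : R :=
  ∑ π ∈ partitionsOf S, ∏ P ∈ π, f P

theorem partitionSum_congr {f g : Finset α → R}
    (h : ∀ P, P.Nonempty → P ⊆ S → f P = g P) : partitionSum f S = partitionSum g S :=
  sum_congr rfl fun _ hπ => prod_congr rfl fun P hP =>
    h P ((mem_partitionsOf.1 hπ).1 P hP) (subset_of_mem_partitionsOf hπ hP)

theorem partitionSum_empty (f : Finset α → R) : partitionSum f ∅ = 1 := by
  simp [partitionSum, partitionsOf_empty]

theorem partitionSum_eq_zero_of_mem {f : Finset α → R} {a : α} (ha : a ∈ S)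
    (hf : ∀ P, a ∈ P → f P = 0) : partitionSum f S = 0 := by
  refine sum_eq_zero fun π hπ => ?_
  obtain ⟨P, hP, haP⟩ := exists_mem_block_of_mem_partitionsOf hπ ha
  exact prod_eq_zero hP (hf P haP)

theorem map_partitionSum {R' : Type*} [CommSemiring R'] (φ : R →+* R') (f : Finset α → R)
    (S : Finset α) : φ (partitionSum f S) = partitionSum (fun P => φ (f P)) S := by
  simp only [partitionSum, map_sum, map_prod]

theorem partitionSum_add (f g : Finset α → R) (S : Finset α) :
    partitionSum (fun P => f P + g P) S =
      ∑ U ∈ S.powerset, partitionSum f U * partitionSum g (S \ U) := by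
  simp only [partitionSum, prod_add, sum_mul_sum, ← sum_product']
  rw [sum_sigma', sum_sigma']
  refine sum_bij' (fun x _ => ⟨x.2.biUnion id, x.2, x.1 \ x.2⟩)
    (fun y _ => ⟨y.2.1 ∪ y.2.2, y.2.1⟩) ?_ ?_ ?_ ?_ fun _ _ => rfl
  · rintro ⟨π, σ⟩ h
    simp only [mem_sigma, mem_powerset, mem_product] at h ⊢
    obtain ⟨hπ, hσ⟩ := h
    exact ⟨(mem_partitionsOf.1 hπ).2.2 ▸ biUnion_subset_biUnion_of_subset_left _ hσ,
      mem_partitionsOf_biUnion_of_subset hπ hσ, sdiff_mem_partitionsOf hπ hσ⟩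
  · rintro ⟨U, π, σ⟩ h
    simp only [mem_sigma, mem_powerset, mem_product] at h ⊢
    obtain ⟨hU, hπ, hσ⟩ := h
    exact ⟨union_sdiff_of_subset hU ▸ union_mem_partitionsOf hπ hσ disjoint_sdiff,
      subset_union_left⟩
  · rintro ⟨π, σ⟩ h
    simp only [mem_sigma, mem_powerset] at h
    simp only [union_sdiff_of_subset h.2]
  · rintro ⟨U, π, σ⟩ h
    simp only [mem_sigma, mem_product] at h
    obtain ⟨-, hπ, hσ⟩ := h
    have hdisj : Disjoint π σ := disjoint_of_mem_partitionsOf hπ hσ disjoint_sdiff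
    simp only [union_sdiff_cancel_left hdisj, (mem_partitionsOf.1 hπ).2.2]

theorem partitionSum_ite_forall_mem (q : α → Prop) [DecidablePred q] (f : Finset α → R)
    (S : Finset α) :
    partitionSum (fun P => if ∀ x ∈ P, q x then f P else 0) S =
      if ∀ x ∈ S, q x then partitionSum f S else 0 := by
  split_ifs with hS
  · exact partitionSum_congr fun P _ hPS => if_pos fun x hx => hS x (hPS hx)
  · push Not at hS
    obtain ⟨a, haS, haq⟩ := hS
    exact partitionSum_eq_zero_of_mem haS fun P haP => if_neg fun hPq => haq (hPq a haP)

theorem partitionSum_ite_mem (f : Finset α → R) {a : α} (ha : a ∈ S) :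
    partitionSum (fun P => if a ∈ P then f P else 0) S = f S := by
  rw [partitionSum, sum_eq_single_of_mem {S} (singleton_mem_partitionsOf ⟨a, ha⟩)]
  · rw [prod_singleton, if_pos ha]
  · intro π hπ hne
    have hblock : ∃ P ∈ π, a ∉ P := by
      by_contra! hall
      exact hne (eq_singleton_of_forall_mem_block hπ ha hall)
    obtain ⟨P, hP, haP⟩ := hblock
    exact prod_eq_zero hP (if_neg haP)

theorem partitionSum_insert (f : Finset α → R) {a : α} (ha : a ∉ S) :
    partitionSum f (insert a S) =
      ∑ U ∈ S.powerset, f (insert a U) * partitionSum f (S \ U) := by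
  have hsplit : partitionSum f (insert a S) = partitionSum
      (fun P => (if a ∈ P then f P else 0) + if ∀ x ∈ P, x ≠ a then f P else 0)
      (insert a S) := by
    refine partitionSum_congr fun P _ _ => ?_
    by_cases haP : a ∈ P
    · rw [if_pos haP, if_neg fun hP => hP a haP rfl, add_zero]
    · rw [if_neg haP, if_pos fun x hx => ne_of_mem_of_not_mem hx haP, zero_add]
  rw [hsplit, partitionSum_add, sum_powerset_insert ha]
  simp only [partitionSum_ite_forall_mem]
  rw [sum_eq_zero, zero_add]
  · refine sum_congr rfl fun U _ => ?_
    rw [partitionSum_ite_mem f (mem_insert_self a U), insert_sdiff_insert,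
      sdiff_insert_of_notMem ha, 
      if_pos fun x hx => ne_of_mem_of_not_mem (mem_sdiff.1 hx).1 ha]
  · intro U hU
    have haU : a ∉ U := fun h => ha (mem_powerset.1 hU h)
    rw [if_neg fun h => h a (mem_sdiff.2 ⟨mem_insert_self a S, haU⟩) rfl, mul_zero]

theorem partitionSum_ite_card_eq_one (x : R) (S : Finset α) :
    partitionSum (fun P => if #P = 1 then x else 0) S = x ^ #S := by
  induction S using Finset.induction_on with
  | empty => rw [partitionSum_empty, card_empty, pow_zero]
  | insert a S ha ih =>
    rw [partitionSum_insert _ ha, sum_eq_single_of_mem ∅ (empty_mem_powerset S)]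
    · rw [insert_empty_eq, card_singleton, if_pos rfl, sdiff_empty, ih, card_insert_of_notMem ha,
        pow_succ']
    · intro U hU hne
      have haU : a ∉ U := fun h => ha (mem_powerset.1 hU h)
      rw [card_insert_of_notMem haU, if_neg (by simpa using hne), zero_mul]

end PartitionSum

section ExponentialFormula

/-- The multiplicity vectors `(i_0, …, i_N)` with `i_0 = 0` of the integer partitions of `n`, where
`i_m` counts the parts equal to `m`. The truncation at `N` loses nothing as long as `n ≤ N`. -/
def multiplicities (N n : ℕ) : Finset (Fin (N + 1) → ℕ) :=
  {i ∈ Fintype.piFinset fun _ => range (N + 1) | i 0 = 0 ∧ ∑ m : Fin (N + 1), (m : ℕ) * i m = n}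

theorem mul_apply_le_sum_mul {N : ℕ} (i : Fin (N + 1) → ℕ) (m : Fin (N + 1)) :
    (m : ℕ) * i m ≤ ∑ x : Fin (N + 1), (x : ℕ) * i x :=
  single_le_sum (f := fun x : Fin (N + 1) => (x : ℕ) * i x) (fun _ _ => Nat.zero_le _) (mem_univ m)

theorem mul_apply_le_of_mem_multiplicities {N n : ℕ} {i : Fin (N + 1) → ℕ}
    (hi : i ∈ multiplicities N n) (m : Fin (N + 1)) : (m : ℕ) * i m ≤ n :=
  (mem_filter.1 hi).2.2 ▸ mul_apply_le_sum_mul i m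

theorem apply_eq_zero_of_mem_multiplicities {N n : ℕ} {i : Fin (N + 1) → ℕ}
    (hi : i ∈ multiplicities N n) {m : Fin (N + 1)} (hm : n < m) : i m = 0 := by
  by_contra him
  exact hm.not_ge ((Nat.le_mul_of_pos_right _ (Nat.pos_of_ne_zero him)).trans
    (mul_apply_le_of_mem_multiplicities hi m))

theorem mem_multiplicities {N n : ℕ} (hn : n ≤ N) {i : Fin (N + 1) → ℕ} :
    i ∈ multiplicities N n ↔ i 0 = 0 ∧ ∑ m : Fin (N + 1), (m : ℕ) * i m = n := by
  refine ⟨fun hi => (mem_filter.1 hi).2, fun hi => mem_filter.2 ⟨?_, hi⟩⟩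
  refine Fintype.mem_piFinset.2 fun m => mem_range_succ_iff.2 ?_
  rcases eq_or_ne m 0 with rfl | hm
  · exact hi.1.trans_le (Nat.zero_le N)
  · calc i m ≤ m * i m := Nat.le_mul_of_pos_left _ (Fin.pos_iff_ne_zero.2 hm)
      _ ≤ n := hi.2 ▸ mul_apply_le_sum_mul i m
      _ ≤ N := hn

theorem multiplicities_zero (N : ℕ) : multiplicities N 0 = {0} := by
  refine eq_singleton_iff_unique_mem.2 ⟨by simp [multiplicities], fun i hi => funext fun m => ?_⟩
  have hzero : (m : ℕ) * i m = 0 := Nat.le_zero.1 (mul_apply_le_of_mem_multiplicities hi m)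
  rcases Nat.mul_eq_zero.1 hzero with hm | hm
  · exact (Fin.ext hm : m = 0) ▸ (mem_filter.1 hi).2.1
  · exact hm

theorem sum_mul_add_single {N : ℕ} (i : Fin (N + 1) → ℕ) (m : Fin (N + 1)) :
    ∑ x : Fin (N + 1), (x : ℕ) * (i + Pi.single m 1 : Fin (N + 1) → ℕ) x =
      ∑ x : Fin (N + 1), (x : ℕ) * i x + m := by
  simp [mul_add, sum_add_distrib, Pi.single_apply]

theorem add_single_mem_multiplicities_iff {N n : ℕ} {i : Fin (N + 1) → ℕ} {m : Fin (N + 1)}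
    (hm : m ≠ 0) (hn : n + m ≤ N) :
    i + Pi.single m 1 ∈ multiplicities N (n + m) ↔ i ∈ multiplicities N n := by
  rw [mem_multiplicities hn, mem_multiplicities (by omega), sum_mul_add_single,
    Nat.add_right_cancel_iff, Pi.add_apply, Pi.single_eq_of_ne hm.symm, add_zero]

variable {K : Type*} [Field K]

/-- The monomial `∏_m b_m^{i_m} / i_m!` in the expansion of `exp (∑_m b_m t^m)`. -/
noncomputable def expTerm (b : ℕ → K) {N : ℕ} (i : Fin (N + 1) → ℕ) : K :=
  ∏ m : Fin (N + 1), b m ^ i m / (i m).factorial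

/-- For `n ≤ N`, the coefficient of `t^n` in `exp (∑_{m ≥ 1} b_m t^m)`. -/
noncomputable def expCoeff (b : ℕ → K) (N n : ℕ) : K :=
  ∑ i ∈ multiplicities N n, expTerm b i

theorem expCoeff_zero (b : ℕ → K) (N : ℕ) : expCoeff b N 0 = 1 := by
  simp [expCoeff, multiplicities_zero, expTerm]

variable [CharZero K]

theorem succ_mul_expTerm_add_single (b : ℕ → K) {N : ℕ} (i : Fin (N + 1) → ℕ)
    (m : Fin (N + 1)) :
    (i m + 1 : K) * expTerm b (i + Pi.single m 1) = b m * expTerm b i := by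
  set i' : Fin (N + 1) → ℕ := i + Pi.single m 1 with hi'
  have hrest : ∏ x ∈ univ.erase m, b x ^ i' x / ((i' x).factorial : K) =
      ∏ x ∈ univ.erase m, b x ^ i x / ((i x).factorial : K) :=
    prod_congr rfl fun x hx => by
      rw [hi', Pi.add_apply, Pi.single_eq_of_ne (ne_of_mem_erase hx), add_zero]
  have hfactorial : ((i m).factorial : K) ≠ 0 := Nat.cast_ne_zero.2 (Nat.factorial_ne_zero _)
  have hsucc : (i m + 1 : K) ≠ 0 := Nat.cast_add_one_ne_zero _
  rw [expTerm, expTerm, ← mul_prod_erase _ _ (mem_univ m), ← mul_prod_erase _ _ (mem_univ m),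
    hrest, hi', Pi.add_apply, Pi.single_eq_same, Nat.factorial_succ, pow_succ]
  push_cast
  field_simp

theorem sum_apply_mul_expTerm (b : ℕ → K) {N n : ℕ} {m : Fin (N + 1)} (hm : m ≠ 0)
    (hn : n + m ≤ N) :
    ∑ i ∈ multiplicities N (n + m), (i m : K) * expTerm b i = b m * expCoeff b N n := by
  rw [expCoeff, mul_sum]
  symm
  refine sum_of_injOn (fun i => i + Pi.single m 1) (add_left_injective _).injOn
    (fun i hi => (add_single_mem_multiplicities_iff hm hn).2 hi) (fun i hi hi' => ?_)
    fun i _ => ?_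
  · have him : i m = 0 := by
      by_contra him
      have hle : Pi.single m 1 ≤ i := fun x => by
        rcases eq_or_ne x m with rfl | hx
        · simpa using Nat.one_le_iff_ne_zero.2 him
        · simp [hx]
      have hcancel : i - Pi.single m 1 + Pi.single m 1 = i := tsub_add_cancel_of_le hle
      exact hi' ⟨i - Pi.single m 1,
        (add_single_mem_multiplicities_iff hm hn).1 (hcancel.symm ▸ hi), hcancel⟩
    rw [him, Nat.cast_zero, zero_mul]
  · rw [← succ_mul_expTerm_add_single, Pi.add_apply, Pi.single_eq_same, Nat.cast_add_one]

/-- Coefficientwise form of `t F' = (∑ m b_m t^m) F` for `F = exp (∑ b_m t^m)`. -/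
theorem mul_expCoeff (b : ℕ → K) {N n : ℕ} (hn : n ≤ N) :
    n * expCoeff b N n = ∑ m ∈ range (n + 1), m * b m * expCoeff b N (n - m) := by
  have hpart (m : Fin (N + 1)) : ∑ i ∈ multiplicities N n, ((m * i m : ℕ) : K) * expTerm b i =
      if (m : ℕ) ∈ range (n + 1) then m * b m * expCoeff b N (n - m) else 0 := by
    simp only [Nat.cast_mul, mul_assoc, ← mul_sum]
    split_ifs with hmn
    · rcases eq_or_ne m 0 with rfl | hm
      · simp
      · have hadd : n - m + m = n := Nat.sub_add_cancel (mem_range_succ_iff.1 hmn)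
        rw [← sum_apply_mul_expTerm b hm (hadd.trans_le hn), hadd]
    · rw [sum_eq_zero, mul_zero]
      intro i hi
      rw [apply_eq_zero_of_mem_multiplicities hi (by simpa using hmn), Nat.cast_zero, zero_mul]
  calc n * expCoeff b N n
      = ∑ i ∈ multiplicities N n, ∑ m : Fin (N + 1), ((m * i m : ℕ) : K) * expTerm b i := by
        rw [expCoeff, mul_sum]
        refine sum_congr rfl fun i hi => ?_
        rw [← sum_mul, ← Nat.cast_sum, (mem_filter.1 hi).2.2]
    _ = ∑ m : Fin (N + 1),
          if (m : ℕ) ∈ range (n + 1) then m * b m * expCoeff b N (n - m) else 0 := by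
        rw [sum_comm]
        exact sum_congr rfl fun m _ => hpart m
    _ = ∑ m ∈ range (n + 1), m * b m * expCoeff b N (n - m) := by
        rw [Fin.sum_univ_eq_sum_range
            (fun m => if m ∈ range (n + 1) then m * b m * expCoeff b N (n - m) else 0),
          ← sum_filter, filter_mem_eq_inter, inter_eq_right.2 (range_subset_range.2 (by omega))]

theorem sum_choose_smul_mul_expCoeff (a : ℕ → K) {N n : ℕ} (hn : n + 1 ≤ N) :
    ∑ u ∈ range (n + 1), n.choose u • (a (u + 1) *
        ((n - u).factorial * expCoeff (fun m => a m / m.factorial) N (n - u))) =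
      (n + 1).factorial * expCoeff (fun m => a m / m.factorial) N (n + 1) := by
  set b : ℕ → K := fun m => a m / m.factorial with hb
  calc _ = ∑ u ∈ range (n + 1),
          n.factorial * ((u + 1 : ℕ) * b (u + 1) * expCoeff b N (n + 1 - (u + 1))) := by
        refine sum_congr rfl fun u hu => ?_
        have hchoose : (n.choose u * u.factorial * (n - u).factorial : K) = n.factorial :=
          mod_cast Nat.choose_mul_factorial_mul_factorial (mem_range_succ_iff.1 hu)
        have hfactorial : (u.factorial : K) ≠ 0 := Nat.cast_ne_zero.2 (Nat.factorial_ne_zero u)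
        have hsucc : (u + 1 : K) ≠ 0 := Nat.cast_add_one_ne_zero u
        simp only [hb, ← hchoose, Nat.add_sub_add_right, Nat.factorial_succ, nsmul_eq_mul]
        push_cast
        field_simp
    _ = n.factorial * ((n + 1 : ℕ) * expCoeff b N (n + 1)) := by
        rw [mul_expCoeff b hn, sum_range_succ' _ (n + 1), Nat.cast_zero, zero_mul, zero_mul,
          add_zero, mul_sum]
    _ = (n + 1).factorial * expCoeff b N (n + 1) := by
        rw [Nat.factorial_succ]
        push_cast
        ring

/-- The exponential formula for set partitions. -/
theorem partitionSum_card_eq_factorial_mul_expCoeff {α : Type*} [DecidableEq α] (a : ℕ → K)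
    {N : ℕ} {S : Finset α} (hS : #S ≤ N) :
    partitionSum (fun P => a #P) S =
      (#S).factorial * expCoeff (fun m => a m / m.factorial) N #S := by
  induction S using Finset.strongInduction with
  | H S ih =>
  rcases S.eq_empty_or_nonempty with rfl | ⟨x, hx⟩
  · simp [partitionSum_empty, expCoeff_zero]
  obtain ⟨T, hxT, rfl⟩ : ∃ T, x ∉ T ∧ insert x T = S :=
    ⟨S.erase x, notMem_erase x S, insert_erase hx⟩
  rw [card_insert_of_notMem hxT] at hS ⊢
  rw [partitionSum_insert _ hxT, ← sum_choose_smul_mul_expCoeff a hS, ← sum_powerset_apply_card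
    (fun u => a (u + 1) *
      ((#T - u).factorial * expCoeff (fun m => a m / m.factorial) N (#T - u)))]
  refine sum_congr rfl fun U hU => ?_
  have hUT := mem_powerset.1 hU
  rw [ih (T \ U) (sdiff_subset.trans_ssubset (ssubset_insert hxT))
      ((card_le_card sdiff_subset).trans (by omega)),
    card_insert_of_notMem fun h => hxT (hUT h), card_sdiff_of_subset hUT]

end ExponentialFormula

section Rho

open Polynomial

/-- The constant part of the weight of a block of size `n` for which `partitionSum` gives
`ρ̄(T^s)`: it is `n!` times the coefficient of `t^n` in `-∑_{m ≥ 2} ζ(m) t^m / m`. -/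
noncomputable def rhoWeight (n : ℕ) : ℝ :=
  if 2 ≤ n then -((n - 1).factorial * zetaVal n) else 0

theorem rhoWeight_div_factorial {m : ℕ} (hm : 2 ≤ m) :
    rhoWeight m / m.factorial = -zetaVal m / m := by
  have hm0 : (m : ℝ) ≠ 0 := Nat.cast_ne_zero.2 (by omega)
  have hfactorial : ((m - 1).factorial : ℝ) ≠ 0 := Nat.cast_ne_zero.2 (Nat.factorial_ne_zero _)
  rw [rhoWeight, if_pos hm, ← Nat.mul_factorial_pred (by omega : m ≠ 0), Nat.cast_mul]
  field_simp

theorem sum_prod_zetaVal_eq_expCoeff {s j : ℕ} (hj : j ≤ s) :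
    ∑ i ∈ (Fintype.piFinset fun _ : Fin (s + 1) => range (s + 1)) with
        (∀ m : Fin (s + 1), m.1 < 2 → i m = 0) ∧ j + ∑ m : Fin (s + 1), m.1 * i m = s,
      ∏ m : Fin (s + 1), (-zetaVal m.1 / (m.1 : ℝ)) ^ i m / ((i m).factorial : ℝ) =
      expCoeff (fun m => rhoWeight m / m.factorial) s (s - j) := by
  unfold expCoeff multiplicities
  refine sum_subset_zero_on_sdiff (fun i hi => ?_) (fun i hi => ?_) fun i hi => ?_
  · obtain ⟨hmem, hlow, hsum⟩ := mem_filter.1 hi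
    exact mem_filter.2 ⟨hmem, hlow 0 (by simp), by omega⟩
  · obtain ⟨himult, hi⟩ := mem_sdiff.1 hi
    obtain ⟨hmem, -, hsum⟩ := mem_filter.1 himult
    obtain ⟨m, hm, him⟩ : ∃ m : Fin (s + 1), m.1 < 2 ∧ i m ≠ 0 := by
      by_contra! hlow
      exact hi (mem_filter.2 ⟨hmem, hlow, by omega⟩)
    refine prod_eq_zero (mem_univ m) ?_
    simp only [rhoWeight, if_neg (show ¬2 ≤ m.1 by omega), zero_div, zero_pow him]
  · refine prod_congr rfl fun m _ => ?_
    beta_reduce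
    rcases lt_or_ge m.1 2 with hm | hm
    · rw [(mem_filter.1 hi).2.1 m hm, pow_zero, pow_zero]
    · rw [rhoWeight_div_factorial hm]

theorem rhoX_eq_sum_expCoeff (s : ℕ) :
    rhoX s = ∑ j ∈ range (s + 1), s.choose j • (X ^ j *
      C ((s - j).factorial * expCoeff (fun m => rhoWeight m / m.factorial) s (s - j))) := by
  rw [rhoX, mul_sum]
  refine sum_congr rfl fun j hj => ?_
  have hjs := mem_range_succ_iff.1 hj
  have hchoose : (s.factorial : ℝ) * (j.factorial : ℝ)⁻¹ = s.choose j * (s - j).factorial := by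
    rw [← Nat.choose_mul_factorial_mul_factorial hjs]
    push_cast
    field_simp
  rw [← sum_mul, ← sum_prod_zetaVal_eq_expCoeff hjs, nsmul_eq_mul]
  simp only [← map_prod, ← map_sum, ← C_eq_natCast]
  generalize (∑ i ∈ _, _ : ℝ) = c
  calc C (s.factorial : ℝ) * (C c * (X ^ j * C (j.factorial : ℝ)⁻¹))
      = X ^ j * C (s.factorial * (j.factorial : ℝ)⁻¹ * c) := by simp only [map_mul]; ring
    _ = C (s.choose j : ℝ) * (X ^ j * C ((s - j).factorial * c)) := by
      rw [hchoose]; simp only [map_mul]; ring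

theorem partitionSum_rhoWeight {α : Type*} [DecidableEq α] (S : Finset α) :
    partitionSum (fun P => (if #P = 1 then X else 0) + C (rhoWeight #P)) S = rhoX #S := by
  rw [partitionSum_add, rhoX_eq_sum_expCoeff, ← sum_powerset_apply_card (fun u => X ^ u *
    C ((#S - u).factorial * expCoeff (fun m => rhoWeight m / m.factorial) #S (#S - u)))]
  refine sum_congr rfl fun U hU => ?_
  rw [partitionSum_ite_card_eq_one, ← map_partitionSum,
    partitionSum_card_eq_factorial_mul_expCoeff rhoWeight (card_le_card sdiff_subset),
    card_sdiff_of_subset (mem_powerset.1 hU)]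

/-- `ρ̄` as a bundled linear map. -/
noncomputable def rhoLinearMap : ℝ[X] →ₗ[ℝ] ℝ[X] :=
  lsum fun s => LinearMap.toSpanSingleton ℝ ℝ[X] (rhoX s)

theorem rhoLinearMap_apply (p : ℝ[X]) : rhoLinearMap p = rho p := by
  simp [rho, rhoLinearMap, lsum_apply, sum_def, smul_eq_C_mul]

theorem rhoLinearMap_X_pow_mul_C (n : ℕ) (c : ℝ) :
    rhoLinearMap (X ^ n * C c) = rhoX n * C c := by
  rw [X_pow_mul_C, C_mul_X_pow_eq_monomial, rhoLinearMap, lsum_apply,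
    sum_monomial_index c (fun s c => LinearMap.toSpanSingleton ℝ ℝ[X] (rhoX s) c) (map_zero _),
    LinearMap.toSpanSingleton_apply, smul_eq_C_mul, mul_comm]

theorem rho_partitionSum {α : Type*} [DecidableEq α] (q : α → Prop) [DecidablePred q]
    (c : Finset α → ℝ) (S : Finset α) :
    rho (partitionSum
        (fun P => (if ∀ x ∈ P, q x then if #P = 1 then X else 0 else 0) + C (c P)) S) =
      partitionSum (fun P => (if ∀ x ∈ P, q x then (if #P = 1 then X else 0) + C (rhoWeight #P)
        else 0) + C (c P)) S := by
  rw [← rhoLinearMap_apply, partitionSum_add, partitionSum_add, map_sum]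
  refine sum_congr rfl fun U _ => ?_
  rw [partitionSum_ite_forall_mem, partitionSum_ite_forall_mem, ← map_partitionSum]
  split_ifs
  · rw [partitionSum_ite_card_eq_one, rhoLinearMap_X_pow_mul_C, partitionSum_rhoWeight]
  · simp only [zero_mul, map_zero]

end Rho

section BlockWeights

open Polynomial

variable {ι : Type*} {k : ι → ℕ} {P : Finset ι}

theorem sum_eq_one_iff_card_eq_one (hk : ∀ p ∈ P, 1 ≤ k p) (hP : P.Nonempty) :
    ∑ p ∈ P, k p = 1 ↔ #P = 1 ∧ ∀ p ∈ P, k p = 1 := by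
  constructor
  · intro hsum
    have hcard : #P ≤ ∑ p ∈ P, k p := by
      simpa using card_nsmul_le_sum P k 1 hk
    refine ⟨le_antisymm (hcard.trans_eq hsum) hP.card_pos, fun p hp => le_antisymm ?_ (hk p hp)⟩
    exact hsum ▸ single_le_sum (fun _ _ => Nat.zero_le _) hp
  · rintro ⟨hcard, hone⟩
    rw [sum_congr rfl hone, sum_const, hcard, one_smul]

/-- The weight `(|P| - 1)! E(∑_{p ∈ P} k_p; T)` of a block `P` in the harmonic-type sum. -/
noncomputable def harmonicWeight (k : ι → ℕ) (P : Finset ι) : ℝ[X] :=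
  (#P - 1).factorial * Epoly (∑ p ∈ P, k p)

/-- The weight `(|P| - 1)! χ_K(P) E(∑_{p ∈ P} k_p; T)` of a block `P` in the shuffle-type sum. -/
noncomputable def shuffleWeight (k : ι → ℕ) (P : Finset ι) : ℝ[X] :=
  (if 1 < #P ∧ ∀ p ∈ P, k p = 1 then 0 else 1) * harmonicWeight k P

/-- The constant term of `harmonicWeight`. -/
noncomputable def constWeight (k : ι → ℕ) (P : Finset ι) : ℝ :=
  if ∑ p ∈ P, k p = 1 then 0 else (#P - 1).factorial * zetaVal (∑ p ∈ P, k p)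

theorem harmonicWeight_eq_add_C (hk : ∀ p ∈ P, 1 ≤ k p) (hP : P.Nonempty) :
    harmonicWeight k P =
      (if ∀ p ∈ P, k p = 1 then if #P = 1 then X else 0 else 0) + C (constWeight k P) := by
  have hiff := sum_eq_one_iff_card_eq_one hk hP
  simp only [harmonicWeight, Epoly, constWeight, ← ite_and, and_comm (b := #P = 1), ← hiff]
  split_ifs with hsum
  · simp [(hiff.1 hsum).1]
  · simp

theorem shuffleWeight_eq_add_C (hk : ∀ p ∈ P, 1 ≤ k p) (hP : P.Nonempty) :
    shuffleWeight k P =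
      (if ∀ p ∈ P, k p = 1 then (if #P = 1 then X else 0) + C (rhoWeight #P) else 0) +
        C (constWeight k P) := by
  rw [shuffleWeight, harmonicWeight_eq_add_C hk hP]
  by_cases hone : ∀ p ∈ P, k p = 1
  · rcases (Nat.one_le_iff_ne_zero.2 hP.card_ne_zero).eq_or_lt' with hcard | hcard
    · simp [hcard, rhoWeight]
    · have hsum : ∑ p ∈ P, k p = #P := by rw [sum_congr rfl hone, card_eq_sum_ones]
      have hcancel : rhoWeight #P + constWeight k P = 0 := by
        rw [rhoWeight, constWeight, hsum, if_pos (Nat.succ_le_of_lt hcard), if_neg hcard.ne',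
          neg_add_cancel]
      rw [if_pos ⟨hcard, hone⟩, zero_mul, if_pos hone, if_neg hcard.ne', zero_add, ← C_add,
        hcancel, C_0]
  · simp [hone]

theorem rho_partitionSum_harmonicWeight [DecidableEq ι] {S : Finset ι}
    (hk : ∀ p ∈ S, 1 ≤ k p) :
    rho (partitionSum (harmonicWeight k) S) = partitionSum (shuffleWeight k) S := by
  rw [partitionSum_congr fun P hP hPS => harmonicWeight_eq_add_C (fun p hp => hk p (hPS hp)) hP,
    partitionSum_congr fun P hP hPS => shuffleWeight_eq_add_C (fun p hp => hk p (hPS hp)) hP]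
  exact rho_partitionSum (fun p => k p = 1) (constWeight k) S

theorem sum_cbar_mul_Hpoly {r : ℕ} (k : Fin r → ℕ) (S : Finset (Fin r)) :
    ∑ π ∈ partitionsOf S, (cbar π : ℝ[X]) * Hpoly k π = partitionSum (harmonicWeight k) S := by
  simp only [partitionSum, harmonicWeight, cbar, Hpoly, Nat.cast_prod, prod_mul_distrib]

theorem sum_cbar_mul_Hstar {r : ℕ} (k : Fin r → ℕ) (S : Finset (Fin r)) :
    ∑ π ∈ partitionsOf S, (cbar π : ℝ[X]) * Hstar k π = partitionSum (shuffleWeight k) S := by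
  refine sum_congr rfl fun π _ => ?_
  rw [cbar, Hstar, Nat.cast_prod, ← prod_mul_distrib]
  refine prod_congr rfl fun P _ => ?_
  rw [shuffleWeight, harmonicWeight, mul_left_comm]
  congr

end BlockWeights

/-- For any index `K = (k_1, …, k_r)` of positive integers,
`ρ̄( Σ_{Π ∈ P(r)} c̄(Π) H(K;Π;T) ) = Σ_{Π ∈ P(r)} c̄(Π) H*(K;Π;T)` in `ℝ[T]`. -/
theorem rho_harmonic_sum_eq_shuffle_sum {r : ℕ} (k : Fin r → ℕ) (hk : ∀ i, 1 ≤ k i) :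
    rho (∑ π ∈ partitionsOf (Finset.univ : Finset (Fin r)),
        (cbar π : Polynomial ℝ) * Hpoly k π) =
      ∑ π ∈ partitionsOf (Finset.univ : Finset (Fin r)),
        (cbar π : Polynomial ℝ) * Hstar k π := by
  rw [sum_cbar_mul_Hpoly, sum_cbar_mul_Hstar]
  exact rho_partitionSum_harmonicWeight fun p _ => hk p
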